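/- arXiv:math/0301347 — 3 statements merged into one kernel-verified Lean document; each statement's English description precedes it below -/
import Mathlib

section
/- Let Ā be a homomorphic image of a ring A. For any right Ā-module X (viewed as an A-module by restriction of scalars) and any finite projective right A-module P, one has Ext^i_A(X,P) = 0 for all i < grade_A(Ā). -/
open CategoryTheory MulOpposite

attribute [local instance] HasDerivedCategory.standard
attribute [local instance] CategoryTheory.hasExt_of_hasDerivedCategory

set_option maxHeartbeats 1000000
set_option synthInstance.maxHeartbeats 400000

noncomputable section
namespace MoritaHochschild

/-! ### Grade of a module, via vanishing of Ext -/

/-- The grade of a right `R`-module `X`: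
`grade_R X = inf { i | Ext^i_R(X, R) ≠ 0 }`, as an element of `ℕ∞`. -/
def rgrade (R : Type) [Ring R] (X : Type) [AddCommGroup X] [Module Rᵐᵒᵖ X] : ℕ∞ :=
  sInf {i : ℕ∞ | ∃ n : ℕ, i = n ∧
    ¬ Subsingleton (Abelian.Ext (ModuleCat.of Rᵐᵒᵖ X) (ModuleCat.of Rᵐᵒᵖ R) n)}

/-- The grade of a left `R`-module `X`. -/
def lgrade (R : Type) [Ring R] (X : Type) [AddCommGroup X] [Module R X] : ℕ∞ :=
  sInf {i : ℕ∞ | ∃ n : ℕ, i = n ∧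
    ¬ Subsingleton (Abelian.Ext (ModuleCat.of R X) (ModuleCat.of R R) n)}

/-!
Restriction of scalars `F` along `Aᵐᵒᵖ → Āᵐᵒᵖ` is exact and preserves coproducts. A right `Ā`-module
`X` sits in an exact sequence `0 → K → ∐ Ā → X → 0` of `Ā`-modules, so in the long exact sequence
`Extⁱ(F X, Y)` lies between `Extⁱ⁻¹(F K, Y)`, which vanishes by induction on `i`, and
`Extⁱ(∐ F Ā, Y)`, which vanishes whenever `Extⁱ(F Ā, Y)` does: embedding `Y` into an injective
reduces this to a statement about `Hom`, where it is the universal property of the coproduct.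
For `Y = A` the hypothesis `Extⁱ(F Ā, A) = 0` holds below the grade; a finite projective `Y` is then
a matter of additivity, its identity being a finite sum of maps that factor through `A`.
-/

open Limits Abelian

universe w v v' u u'

lemma exists_shortExact_injective {C : Type u} [Category.{v} C] [Abelian C]
    [EnoughInjectives C] (Y : C) :
    ∃ (I Z : C) (f : Y ⟶ I) (g : I ⟶ Z) (h : f ≫ g = 0),
      Injective I ∧ (ShortComplex.mk f g h).ShortExact :=
  ⟨Injective.under Y, cokernel (Injective.ι Y), Injective.ι Y, cokernel.π _, cokernel.condition _,
    inferInstance, { exact := ShortComplex.exact_cokernel _ }⟩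

section Ext

variable {C : Type u} [Category.{v} C] [Abelian C] [HasExt.{w} C]

lemma subsingleton_ext_zero_iff {X Y : C} : Subsingleton (Ext.{w} X Y 0) ↔ ∀ f : X ⟶ Y, f = 0 :=
  Ext.homEquiv₀.subsingleton_congr.trans (subsingleton_iff_forall_eq 0)

section InjectiveMiddleTerm

variable {S : ShortComplex C} (hS : S.ShortExact) [Injective S.X₂]

include hS

lemma subsingleton_ext_one_iff_forall_lift {X : C} :
    Subsingleton (Ext.{w} X S.X₁ 1) ↔ ∀ f : X ⟶ S.X₃, ∃ g : X ⟶ S.X₂, g ≫ S.g = f := by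
  refine ⟨fun _ f ↦ ?_, fun lift ↦ subsingleton_of_forall_eq 0 fun x ↦ ?_⟩
  · obtain ⟨y, hy⟩ := Ext.covariant_sequence_exact₃ X hS (Ext.mk₀ f) rfl (Subsingleton.elim _ _)
    obtain ⟨g, rfl⟩ := (Ext.mk₀_bijective _ _).2 y
    exact ⟨g, (Ext.mk₀_bijective _ _).1 (by rw [← hy, Ext.mk₀_comp_mk₀])⟩
  · obtain ⟨y, rfl⟩ := Ext.covariant_sequence_exact₁ X hS x (Ext.eq_zero_of_injective _) rfl
    obtain ⟨f, rfl⟩ := (Ext.mk₀_bijective _ _).2 y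
    obtain ⟨g, rfl⟩ := lift f
    rw [← Ext.mk₀_comp_mk₀, Ext.comp_assoc_of_second_deg_zero, hS.comp_extClass, Ext.comp_zero]

lemma subsingleton_ext_add_two_iff {X : C} {n : ℕ} :
    Subsingleton (Ext.{w} X S.X₁ (n + 2)) ↔ Subsingleton (Ext.{w} X S.X₃ (n + 1)) := by
  refine ⟨fun _ ↦ subsingleton_of_forall_eq 0 fun y ↦ ?_,
    fun _ ↦ subsingleton_of_forall_eq 0 fun x ↦ ?_⟩
  · obtain ⟨z, rfl⟩ := Ext.covariant_sequence_exact₃ X hS y rfl (Subsingleton.elim _ _)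
    rw [Ext.eq_zero_of_injective z, Ext.zero_comp]
  · obtain ⟨y, rfl⟩ := Ext.covariant_sequence_exact₁ X hS x (Ext.eq_zero_of_injective _) rfl
    rw [Subsingleton.elim y 0, Ext.zero_comp]

end InjectiveMiddleTerm

lemma subsingleton_ext_of_isColimit_cofan [EnoughInjectives C] {J : Type*} {M : J → C}
    {c : Cofan M} (hc : IsColimit c) {Y : C} {n : ℕ}
    (hM : ∀ j, Subsingleton (Ext.{w} (M j) Y n)) : Subsingleton (Ext.{w} c.pt Y n) := by
  induction n using Nat.twoStepInduction generalizing Y with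
  | zero =>
    simp only [subsingleton_ext_zero_iff] at hM ⊢
    exact fun f ↦ Cofan.IsColimit.hom_ext hc _ _ fun j ↦ (hM j _).trans comp_zero.symm
  | one =>
    obtain ⟨I, Z, f, g, h, _, hS⟩ := exists_shortExact_injective Y
    simp only [subsingleton_ext_one_iff_forall_lift hS] at hM ⊢
    intro a
    choose b hb using fun j ↦ hM j (c.inj j ≫ a)
    exact ⟨Cofan.IsColimit.desc hc b, Cofan.IsColimit.hom_ext hc _ _ fun j ↦ by simp [hb]⟩
  | more n _ ih =>
    obtain ⟨I, Z, f, g, h, _, hS⟩ := exists_shortExact_injective Y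
    simp only [subsingleton_ext_add_two_iff hS] at hM ⊢
    exact ih hM

lemma subsingleton_ext_zero_of_epi {X X' Y : C} (f : X ⟶ X') [Epi f]
    [Subsingleton (Ext.{w} X Y 0)] : Subsingleton (Ext.{w} X' Y 0) :=
  (Ext.precomp_mk₀_injective_of_epi Y f).subsingleton

lemma subsingleton_ext_succ_of_shortExact {S : ShortComplex C} (hS : S.ShortExact) {Y : C} {n : ℕ}
    [Subsingleton (Ext.{w} S.X₁ Y n)] [Subsingleton (Ext.{w} S.X₂ Y (n + 1))] :
    Subsingleton (Ext.{w} S.X₃ Y (n + 1)) := by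
  refine subsingleton_of_forall_eq 0 fun x ↦ ?_
  obtain ⟨y, rfl⟩ :=
    Ext.contravariant_sequence_exact₃ hS Y x (Subsingleton.elim _ _) (add_comm 1 n)
  rw [Subsingleton.elim y 0, Ext.comp_zero]

lemma subsingleton_ext_congr {X X' Y Y' : C} (e : X ≅ X') (e' : Y ≅ Y') {n : ℕ} :
    Subsingleton (Ext.{w} X Y n) ↔ Subsingleton (Ext.{w} X' Y' n) :=
  (((extFunctor n).mapIso e.symm.op).app Y ≪≫
    (extFunctorObj X' n).mapIso e').addCommGroupIsoToAddEquiv.toEquiv.subsingleton_congr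

theorem subsingleton_ext_obj_of_isSeparator [EnoughInjectives C] {D : Type u'} [Category.{v'} D]
    [Abelian D] [HasCoproducts.{v'} D] (F : D ⥤ C) [F.PreservesZeroMorphisms]
    [PreservesFiniteLimits F] [PreservesFiniteColimits F]
    [∀ J : Type v', PreservesColimitsOfShape (Discrete J) F]
    {G : D} (hG : IsSeparator G) {Y : C} {i : ℕ}
    (hY : ∀ j ≤ i, Subsingleton (Ext.{w} (F.obj G) Y j)) (X : D) :
    Subsingleton (Ext.{w} (F.obj X) Y i) := by
  have cover_epi := (isSeparator_iff_epi G).1 hG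
  have ext_coproduct (J : Type v') {j : ℕ} (hj : Subsingleton (Ext.{w} (F.obj G) Y j)) :
      Subsingleton (Ext.{w} (F.obj (∐ fun _ : J ↦ G)) Y j) :=
    subsingleton_ext_of_isColimit_cofan
      (isColimitOfHasCoproductOfPreservesColimit F fun _ : J ↦ G) fun _ ↦ hj
  induction i generalizing X with
  | zero =>
    have := ext_coproduct (G ⟶ X) (hY 0 le_rfl)
    exact subsingleton_ext_zero_of_epi (F.map (Sigma.desc fun f : G ⟶ X ↦ f))
  | succ i ih =>
    let π : (∐ fun _ : G ⟶ X ↦ G) ⟶ X := Sigma.desc fun f ↦ f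
    let S := ShortComplex.mk (kernel.ι π) π (kernel.condition π)
    have hS : S.ShortExact := { exact := ShortComplex.exact_kernel π, epi_g := cover_epi X }
    have : Subsingleton (Ext.{w} (S.map F).X₁ Y i) :=
      ih (fun j hj ↦ hY j (hj.trans i.le_succ)) (kernel π)
    have : Subsingleton (Ext.{w} (S.map F).X₂ Y (i + 1)) := ext_coproduct _ (hY _ le_rfl)
    exact subsingleton_ext_succ_of_shortExact (hS.map_of_exact F)

end Ext

section Modules

instance preservesFiniteLimits_restrictScalars {R S : Type*} [Ring R] [Ring S] (f : R →+* S) :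
    PreservesFiniteLimits (ModuleCat.restrictScalars.{v} f) where
  preservesFiniteLimits _ _ _ := { preservesLimit := inferInstance }

instance preservesColimits_restrictScalars {R S : Type*} [Ring R] [Ring S] (f : R →+* S) :
    PreservesColimits (ModuleCat.restrictScalars.{v} f) where
  preservesColimitsOfShape := { preservesColimit := inferInstance }

/-- The module obtained by `ModuleCat.restrictScalars f`, identified with the same abelian group
carrying a given `R`-module structure; the hypothesis `h` is propositional because that structure
need not be definitionally the one induced along `f`. -/
def restrictScalarsObjIso {R S : Type*} [Ring R] [Ring S] (f : R →+* S) {M : Type v}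
    [AddCommGroup M] [Module R M] [Module S M] (h : ∀ (r : R) (m : M), r • m = f r • m) :
    (ModuleCat.restrictScalars f).obj (ModuleCat.of S M) ≅ ModuleCat.of R M :=
  ModuleCat.isoMk (Iso.refl _) fun r ↦ AddCommGrpCat.ext (h r)

lemma isSeparator_of_surjective {R : Type*} [Ring R] {M : Type v} [AddCommGroup M] [Module R M]
    (e : M →ₗ[R] R) (he : Function.Surjective e) : IsSeparator (ModuleCat.of R M) := by
  refine (isSeparator_def _).2 fun X Y f g h ↦ ModuleCat.hom_ext (LinearMap.ext fun x ↦ ?_)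
  obtain ⟨m, hm⟩ := he 1
  simpa [hm] using
    ConcreteCategory.congr_hom (h (ModuleCat.ofHom (LinearMap.toSpanSingleton R X x ∘ₗ e))) m

lemma isZero_obj_of_finite_of_projective {R : Type u} [Ring R] {D : Type*} [Category* D]
    [Preadditive D] (F : ModuleCat.{u} R ⥤ D) [F.Additive] (hR : IsZero (F.obj (ModuleCat.of R R)))
    (P : Type u) [AddCommGroup P] [Module R P] [Module.Finite R P] [Module.Projective R P] :
    IsZero (F.obj (ModuleCat.of R P)) := by
  obtain ⟨n, f, g, -, -, hfg⟩ := Module.Finite.exists_comp_eq_id_of_projective R P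
  have id_eq_sum : 𝟙 (ModuleCat.of R P) = ∑ k : Fin n,
      ModuleCat.ofHom (LinearMap.proj k ∘ₗ g) ≫
        ModuleCat.ofHom (f ∘ₗ LinearMap.single R (fun _ ↦ R) k) := by
    ext x
    calc x = f (g x) := (LinearMap.congr_fun hfg x).symm
      _ = ∑ k, f (Pi.single k (g x k)) := by rw [← map_sum, Finset.univ_sum_single]
      _ = _ := by simp [ModuleCat.hom_sum]
  rw [IsZero.iff_id_eq_zero, ← F.map_id, id_eq_sum, F.map_sum]
  exact Finset.sum_eq_zero fun k _ ↦ by rw [F.map_comp, hR.eq_zero_of_tgt (F.map _), zero_comp]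

lemma subsingleton_ext_of_finite_of_projective {R : Type u} [Ring R] [HasExt.{w} (ModuleCat.{u} R)]
    {X : ModuleCat.{u} R} {i : ℕ} (hR : Subsingleton (Ext.{w} X (ModuleCat.of R R) i))
    (P : Type u) [AddCommGroup P] [Module R P] [Module.Finite R P] [Module.Projective R P] :
    Subsingleton (Ext.{w} X (ModuleCat.of R P) i) := by
  have := isZero_obj_of_finite_of_projective (extFunctorObj.{w} X i)
    (AddCommGrpCat.isZero_iff_subsingleton.2 hR) P
  exact AddCommGrpCat.isZero_iff_subsingleton.1 this

end Modules

lemma subsingleton_ext_of_lt_rgrade {R X : Type} [Ring R] [AddCommGroup X] [Module Rᵐᵒᵖ X] {n : ℕ}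
    (hn : (n : ℕ∞) < rgrade R X) :
    Subsingleton (Ext (ModuleCat.of Rᵐᵒᵖ X) (ModuleCat.of Rᵐᵒᵖ R) n) := by
  by_contra h
  exact notMem_of_lt_csInf hn (OrderBot.bddBelow _) ⟨n, rfl, h⟩

theorem ext_into_finite_projective_vanishes_below_grade_general
    {A Abar : Type} [Ring A] [Ring Abar] (p : A →+* Abar)
    [Module Aᵐᵒᵖ Abar] (hAbar : ∀ (a : A) (y : Abar), op a • y = y * p a)
    {X : Type} [AddCommGroup X] [Module Abarᵐᵒᵖ X] [Module Aᵐᵒᵖ X]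
    (hX : ∀ (a : A) (x : X), op a • x = op (p a) • x)
    (P : Type) [AddCommGroup P] [Module Aᵐᵒᵖ P]
    [Module.Finite Aᵐᵒᵖ P] [Module.Projective Aᵐᵒᵖ P]
    {i : ℕ} (hi : (i : ℕ∞) < rgrade A Abar) :
    Subsingleton (Ext (ModuleCat.of Aᵐᵒᵖ X) (ModuleCat.of Aᵐᵒᵖ P) i) := by
  let isoAbar := restrictScalarsObjIso p.op (M := Abar) fun a y ↦ hAbar a.unop y
  let isoX := restrictScalarsObjIso p.op (M := X) fun a x ↦ hX a.unop x
  let isoA := (opLinearEquiv Aᵐᵒᵖ (M := A)).toModuleIso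
  have ext_Abar (j : ℕ) (hj : j ≤ i) :
      Subsingleton (Ext ((ModuleCat.restrictScalars p.op).obj (ModuleCat.of Abarᵐᵒᵖ Abar))
        (ModuleCat.of Aᵐᵒᵖ Aᵐᵒᵖ) j) :=
    (subsingleton_ext_congr isoAbar isoA.symm).2
      (subsingleton_ext_of_lt_rgrade (lt_of_le_of_lt (mod_cast hj) hi))
  have ext_X := subsingleton_ext_obj_of_isSeparator _
    (isSeparator_of_surjective _ (opLinearEquiv Abarᵐᵒᵖ (M := Abar)).surjective) ext_Abar
    (ModuleCat.of Abarᵐᵒᵖ X)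
  exact subsingleton_ext_of_finite_of_projective
    ((subsingleton_ext_congr isoX (Iso.refl _)).1 ext_X) P

/-- Let `Ā` be a homomorphic image of the ring `A`. For any right
`Ā`-module `X` (viewed as an `A`-module by restriction of scalars along `p`) and any
finitely generated projective right `A`-module `P`, `Ext^i_A(X, P) = 0` for
`i < grade_A Ā`. -/
theorem ext_into_finite_projective_vanishes_below_grade
    (A : Type) [Ring A] (Abar : Type) [Ring Abar]
    (p : A →+* Abar) (hsurj : Function.Surjective p)
    [Module Aᵐᵒᵖ Abar] (hAbar : ∀ (a : A) (y : Abar), (op a) • y = y * p a)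
    (X : Type) [AddCommGroup X] [Module Abarᵐᵒᵖ X] [Module Aᵐᵒᵖ X]
    (hX : ∀ (a : A) (x : X), (op a) • x = (op (p a)) • x)
    (P : Type) [AddCommGroup P] [Module Aᵐᵒᵖ P]
    (hfin : Module.Finite Aᵐᵒᵖ P) (hproj : Module.Projective Aᵐᵒᵖ P)
    (i : ℕ) (hi : (i : ℕ∞) < rgrade A Abar) :
    Subsingleton (Abelian.Ext (ModuleCat.of Aᵐᵒᵖ X) (ModuleCat.of Aᵐᵒᵖ P) i) := by
  exact ext_into_finite_projective_vanishes_below_grade_general p hAbar hX P hi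

end MoritaHochschild
end
end

section
/- Let (C,e) be a Morita context with A = eCe, M = e'Ce, and C̄ = C/CeC. The canonical morphism of Morita contexts α_C : C → End_{eCe}(Ce) = End_A(M ⊕ A), given by left multiplication of C on the right A-module Ce = M ⊕ A, satisfies: (1) α_C is injective if and only if Hom_C(C̄,C) = 0, if and only if grade_C C̄ ≥ 1; (2) α_C is bijective if and only if Ext^i_C(C̄,C) = 0 for i = 0,1, if and only if grade_C C̄ ≥ 2. In particular, (C,e) is a right Auslander context if and only if grade_C C̄ ≥ 2. -/
open CategoryTheory MulOpposite

attribute [local instance] HasDerivedCategory.standard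
attribute [local instance] CategoryTheory.hasExt_of_hasDerivedCategory

set_option maxHeartbeats 1000000
set_option synthInstance.maxHeartbeats 400000

noncomputable section
namespace MoritaHochschild

/-! ### Corners `pCq` of a ring with idempotents `p`, `q` -/

variable {C : Type} [Ring C]

instance factOneIdem : Fact (IsIdempotentElem (1 : C)) := ⟨IsIdempotentElem.one⟩

instance factOneSubIdem {e : C} [he : Fact (IsIdempotentElem e)] :
    Fact (IsIdempotentElem (1 - e)) := ⟨he.out.one_sub⟩

/-- The subset `pCq` of a ring `C`; for idempotents `p`, `q` this is the
corresponding "corner" of `C`. -/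
def Hand (p q : C) : Type := {x : C // p * x * q = x}

namespace Hand

variable {p q r : C}

def val (x : Hand p q) : C := x.1

lemma prop (x : Hand p q) : p * x.val * q = x.val := x.2

lemma val_injective : Function.Injective (val (p := p) (q := q)) :=
  fun _ _ h => Subtype.ext h

def mk (x : C) (h : p * x * q = x) : Hand p q := ⟨x, h⟩

instance : Zero (Hand p q) := ⟨⟨0, by simp⟩⟩
instance : Add (Hand p q) :=
  ⟨fun x y => ⟨x.val + y.val, by rw [mul_add, add_mul, x.prop, y.prop]⟩⟩
instance : Neg (Hand p q) :=
  ⟨fun x => ⟨-x.val, by rw [mul_neg, neg_mul, x.prop]⟩⟩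
instance : Sub (Hand p q) :=
  ⟨fun x y => ⟨x.val - y.val, by rw [mul_sub, sub_mul, x.prop, y.prop]⟩⟩
instance : SMul ℕ (Hand p q) :=
  ⟨fun n x => ⟨n • x.val, by rw [mul_smul_comm, smul_mul_assoc, x.prop]⟩⟩
instance : SMul ℤ (Hand p q) :=
  ⟨fun n x => ⟨n • x.val, by rw [mul_smul_comm, smul_mul_assoc, x.prop]⟩⟩

instance : AddCommGroup (Hand p q) :=
  val_injective.addCommGroup val rfl (fun _ _ => rfl) (fun _ => rfl) (fun _ _ => rfl)
    (fun _ _ => rfl) (fun _ _ => rfl)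

/-- `val` as an additive map. -/
def valHom : Hand p q →+ C where
  toFun := val
  map_zero' := rfl
  map_add' := fun _ _ => rfl

@[simp] lemma val_add (x y : Hand p q) : (x + y).val = x.val + y.val := rfl
@[simp] lemma val_zero : (0 : Hand p q).val = 0 := rfl

section Facts

variable [hp : Fact (IsIdempotentElem p)] [hq : Fact (IsIdempotentElem q)]
    [hr : Fact (IsIdempotentElem r)]

lemma left_absorb (x : Hand p q) : p * x.val = x.val := by
  conv_lhs => rw [← x.prop]
  rw [← mul_assoc, ← mul_assoc, hp.out.eq]
  exact x.prop

lemma right_absorb (x : Hand p q) : x.val * q = x.val := by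
  conv_lhs => rw [← x.prop]
  rw [mul_assoc, mul_assoc, hq.out.eq, ← mul_assoc]
  exact x.prop

/-- Multiplication `pCq × qCr → pCr`. -/
def hmul (x : Hand p q) (y : Hand q r) : Hand p r :=
  ⟨x.val * y.val, by
    rw [← mul_assoc, left_absorb x, mul_assoc, right_absorb y]⟩

@[simp] lemma val_hmul (x : Hand p q) (y : Hand q r) :
    (hmul x y).val = x.val * y.val := rfl

/-- Compression of an element of `C` into the corner `pCq`. -/
def compress (p q : C) [hp : Fact (IsIdempotentElem p)] [hq : Fact (IsIdempotentElem q)]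
    (x : C) : Hand p q :=
  ⟨p * x * q, by
    have h1 : p * (p * x * q) * q = (p * p) * x * (q * q) := by noncomm_ring
    rw [h1, hp.out.eq, hq.out.eq]⟩

@[simp] lemma val_compress (x : C) : (compress p q x).val = p * x * q := rfl

instance : Mul (Hand p p) := ⟨fun x y => hmul x y⟩

instance : One (Hand p p) := ⟨⟨p, by rw [hp.out.eq, hp.out.eq]⟩⟩

@[simp] lemma val_mul (x y : Hand p p) : (x * y).val = x.val * y.val := rfl
@[simp] lemma val_one : (1 : Hand p p).val = p := rfl

/-- The corner `pCp` is a ring, with unit `p`. -/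
instance ring : Ring (Hand p p) :=
  { (inferInstance : AddCommGroup (Hand p p)) with
    mul := (· * ·)
    left_distrib := fun x y z => Subtype.ext (mul_add x.val y.val z.val)
    right_distrib := fun x y z => Subtype.ext (add_mul x.val y.val z.val)
    zero_mul := fun x => Subtype.ext (zero_mul x.val)
    mul_zero := fun x => Subtype.ext (mul_zero x.val)
    mul_assoc := fun x y z => Subtype.ext (mul_assoc x.val y.val z.val)
    one := 1
    one_mul := fun x => Subtype.ext (left_absorb x)
    mul_one := fun x => Subtype.ext (right_absorb x) }

/-- `pCq` is a left module over the corner ring `pCp`. -/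
instance : Module (Hand p p) (Hand p q) where
  smul a x := hmul a x
  one_smul x := Subtype.ext (left_absorb x)
  mul_smul a b x := Subtype.ext (mul_assoc a.val b.val x.val)
  smul_zero a := Subtype.ext (mul_zero a.val)
  smul_add a x y := Subtype.ext (mul_add a.val x.val y.val)
  add_smul a b x := Subtype.ext (add_mul a.val b.val x.val)
  zero_smul x := Subtype.ext (zero_mul x.val)

/-- `pCq` is a right module over the corner ring `qCq`. -/
instance : Module (Hand q q)ᵐᵒᵖ (Hand p q) where
  smul a x := hmul x a.unop
  one_smul x := Subtype.ext (right_absorb x)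
  mul_smul a b x := Subtype.ext (mul_assoc x.val b.unop.val a.unop.val).symm
  smul_zero a := Subtype.ext (zero_mul a.unop.val)
  smul_add a x y := Subtype.ext (add_mul x.val y.val a.unop.val)
  add_smul a b x := Subtype.ext (mul_add x.val a.unop.val b.unop.val)
  zero_smul x := Subtype.ext (mul_zero x.val)

@[simp] lemma val_smul (a : Hand p p) (x : Hand p q) : (a • x).val = a.val * x.val := rfl

@[simp] lemma val_op_smul (a : (Hand q q)ᵐᵒᵖ) (x : Hand p q) :
    (a • x).val = x.val * a.unop.val := rfl

/-- `pC = pC1` is a right module over `C` itself. -/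
instance : Module Cᵐᵒᵖ (Hand p (1 : C)) where
  smul c x := ⟨x.val * c.unop, by rw [mul_one, ← mul_assoc, left_absorb x]⟩
  one_smul x := Subtype.ext (mul_one x.val)
  mul_smul a b x := Subtype.ext (mul_assoc x.val b.unop a.unop).symm
  smul_zero a := Subtype.ext (zero_mul a.unop)
  smul_add a x y := Subtype.ext (add_mul x.val y.val a.unop)
  add_smul a b x := Subtype.ext (mul_add x.val a.unop b.unop)
  zero_smul x := Subtype.ext (mul_zero x.val)

@[simp] lemma val_op_smul' (c : Cᵐᵒᵖ) (x : Hand p (1 : C)) :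
    (c • x).val = x.val * c.unop := rfl

/-- `Cq = 1Cq` is a left module over `C` itself. -/
instance : Module C (Hand (1 : C) q) where
  smul c x := ⟨c * x.val, by rw [one_mul, mul_assoc, right_absorb x]⟩
  one_smul x := Subtype.ext (one_mul x.val)
  mul_smul a b x := Subtype.ext (mul_assoc a b x.val)
  smul_zero a := Subtype.ext (mul_zero a)
  smul_add a x y := Subtype.ext (mul_add a x.val y.val)
  add_smul a b x := Subtype.ext (add_mul a b x.val)
  zero_smul x := Subtype.ext (zero_mul x.val)

@[simp] lemma val_smul' (c : C) (x : Hand (1 : C) q) :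
    (c • x).val = c * x.val := rfl

end Facts

end Hand
/-! ### The Morita defect `C̄ = C/CeC` -/

/-- The Morita defect: the quotient ring `C/CeC` of `C` by the two-sided ideal
generated by the idempotent `e`. -/
def CBar (e : C) : Type := (TwoSidedIdeal.span {e}).ringCon.Quotient

instance (e : C) : Ring (CBar e) :=
  inferInstanceAs (Ring (TwoSidedIdeal.span {e}).ringCon.Quotient)

/-- The quotient map `C → C/CeC`. -/
def cbarMk (e : C) : C →+* CBar e := RingCon.mk' _

lemma cbarMk_surjective (e : C) : Function.Surjective (cbarMk e) :=
  fun x => Quotient.inductionOn' x (fun c => ⟨c, rfl⟩)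

lemma cbarMk_eq_zero_iff (e : C) (x : C) :
    cbarMk e x = 0 ↔ x ∈ TwoSidedIdeal.span {e} := by
  have : (0 : CBar e) = cbarMk e 0 := rfl
  rw [this]
  constructor
  · intro h
    have h' := (RingCon.eq _).1 h
    simpa using (TwoSidedIdeal.rel_iff _ _ _).1 h'
  · intro h
    exact (RingCon.eq _).2 ((TwoSidedIdeal.rel_iff _ _ _).2 (by simpa using h))

/-- `C/CeC` as a right `C`-module. -/
noncomputable instance (e : C) : Module Cᵐᵒᵖ (CBar e) :=
  Module.compHom (CBar e) (RingHom.op (cbarMk e))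

lemma op_smul_cbar (e : C) (c : C) (x : CBar e) :
    (MulOpposite.op c) • x = x * cbarMk e c := rfl

/-- `C/CeC` as a left `C`-module. -/
noncomputable instance cbarLeftModule (e : C) : Module C (CBar e) :=
  Module.compHom (CBar e) (cbarMk e)

lemma smul_cbar (e : C) (c : C) (x : CBar e) :
    c • x = cbarMk e c * x := rfl
/-!
Left multiplication `C → End_{eCe}(Ce)` is the composite

  `C ≅ Hom_C(C, C) → Hom_C(CeC, C) → End_{eCe}(Ce)`

of two restriction maps. Since `C` is projective, the exact sequence `0 → CeC → C → C̄ → 0` shows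
that the first restriction is injective iff `Hom_C(C̄, C) = 0` and surjective iff
`Ext¹_C(C̄, C) = 0`. The second is always injective, because `Ce` generates `CeC`; it is surjective
as soon as `C` acts faithfully on `Ce`, that is, as soon as `C → End_{eCe}(Ce)` is injective.
-/

section Grade

variable (R : Type) [Ring R] (X : Type) [AddCommGroup X] [Module Rᵐᵒᵖ X]

lemma natCast_le_rgrade_iff (n : ℕ) :
    n ≤ rgrade R X ↔ ∀ i < n,
      Subsingleton (Abelian.Ext (ModuleCat.of Rᵐᵒᵖ X) (ModuleCat.of Rᵐᵒᵖ R) i) := by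
  rw [rgrade, le_sInf_iff]
  constructor
  · intro h i hi
    by_contra hExt
    exact hi.not_ge (Nat.cast_le.1 (h i ⟨i, rfl, hExt⟩))
  · rintro h _ ⟨i, rfl, hExt⟩
    exact Nat.cast_le.2 (le_of_not_gt fun hi => hExt (h i hi))

lemma one_le_rgrade_iff :
    1 ≤ rgrade R X ↔
      Subsingleton (Abelian.Ext (ModuleCat.of Rᵐᵒᵖ X) (ModuleCat.of Rᵐᵒᵖ R) 0) := by
  simpa only [Nat.cast_one, Nat.lt_one_iff, forall_eq] using natCast_le_rgrade_iff R X 1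

lemma two_le_rgrade_iff :
    2 ≤ rgrade R X ↔
      Subsingleton (Abelian.Ext (ModuleCat.of Rᵐᵒᵖ X) (ModuleCat.of Rᵐᵒᵖ R) 0) ∧
        Subsingleton (Abelian.Ext (ModuleCat.of Rᵐᵒᵖ X) (ModuleCat.of Rᵐᵒᵖ R) 1) := by
  simpa only [Nat.cast_ofNat, Nat.forall_lt_succ_right, Nat.not_lt_zero, IsEmpty.forall_iff,
    implies_true, true_and] using natCast_le_rgrade_iff R X 2

end Grade

section Restriction

universe u v w

lemma subsingleton_ext_one_iff_surjective_precomp {𝒜 : Type u} [Category.{v} 𝒜] [Abelian 𝒜]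
    [HasExt.{w} 𝒜] {S : ShortComplex 𝒜} (hS : S.ShortExact) [Projective S.X₂] (Y : 𝒜) :
    Subsingleton (Abelian.Ext S.X₃ Y 1) ↔
      Function.Surjective (fun ψ : S.X₂ ⟶ Y => S.f ≫ ψ) := by
  constructor
  · intro _ φ
    obtain ⟨x, hx⟩ := Abelian.Ext.contravariant_sequence_exact₁ hS Y (Abelian.Ext.mk₀ φ)
      (add_zero 1) (Subsingleton.elim _ _)
    obtain ⟨ψ, rfl⟩ := (Abelian.Ext.mk₀_bijective _ _).surjective x
    rw [Abelian.Ext.mk₀_comp_mk₀] at hx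
    exact ⟨ψ, (Abelian.Ext.mk₀_bijective _ _).injective hx⟩
  · intro hsurj
    refine subsingleton_of_forall_eq 0 fun ξ => ?_
    obtain ⟨x, rfl⟩ := Abelian.Ext.contravariant_sequence_exact₃ hS Y ξ
      (Abelian.Ext.eq_zero_of_projective _) (add_zero 1)
    obtain ⟨φ, rfl⟩ := (Abelian.Ext.mk₀_bijective _ _).surjective x
    obtain ⟨ψ, rfl⟩ := hsurj φ
    rw [← Abelian.Ext.mk₀_comp_mk₀, hS.extClass_comp_assoc]

variable {R : Type u} [Ring R]

lemma exists_comp_eq_of_ker_le_ker {P X Y : Type*} [AddCommGroup P] [Module R P]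
    [AddCommGroup X] [Module R X] [AddCommGroup Y] [Module R Y] {q : P →ₗ[R] X}
    (hq : Function.Surjective q) {f : P →ₗ[R] Y} (hf : LinearMap.ker q ≤ LinearMap.ker f) :
    ∃ g : X →ₗ[R] Y, g ∘ₗ q = f := by
  refine ⟨(LinearMap.ker q).liftQ f hf ∘ₗ (q.quotKerEquivOfSurjective hq).symm, ?_⟩
  ext x
  have hx : (q.quotKerEquivOfSurjective hq).symm (q x) = (LinearMap.ker q).mkQ x :=
    (LinearEquiv.symm_apply_eq _).2 rfl
  simp [hx]

lemma subsingleton_linearMap_iff_injective_domRestrict {P X : Type*} [AddCommGroup P]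
    [Module R P] [AddCommGroup X] [Module R X] {q : P →ₗ[R] X} (hq : Function.Surjective q)
    (Y : Type*) [AddCommGroup Y] [Module R Y] :
    Subsingleton (X →ₗ[R] Y) ↔
      Function.Injective (fun ψ : P →ₗ[R] Y => ψ.domRestrict (LinearMap.ker q)) := by
  constructor
  · intro _ ψ ψ' h
    obtain ⟨g, hg⟩ : ∃ g : X →ₗ[R] Y, g ∘ₗ q = ψ - ψ' :=
      exists_comp_eq_of_ker_le_ker hq fun x hx => sub_eq_zero.2 (LinearMap.congr_fun h ⟨x, hx⟩)
    rw [← sub_eq_zero, ← hg, Subsingleton.elim g 0, LinearMap.zero_comp]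
  · intro hinj
    refine subsingleton_of_forall_eq 0 fun g => (LinearMap.cancel_right hq).1 (hinj ?_)
    ext x
    simp

variable [HasExt.{w} (ModuleCat.{v} R)] {P X : Type v} [AddCommGroup P] [Module R P]
  [AddCommGroup X] [Module R X] (Y : Type v) [AddCommGroup Y] [Module R Y]

variable (X) in
lemma subsingleton_ext_zero_iff_subsingleton_linearMap :
    Subsingleton (Abelian.Ext (ModuleCat.of R X) (ModuleCat.of R Y) 0) ↔
      Subsingleton (X →ₗ[R] Y) :=
  (Abelian.Ext.homEquiv₀.trans ModuleCat.homEquiv).subsingleton_congr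

lemma subsingleton_ext_one_iff_surjective_domRestrict [Module.Projective R P] {q : P →ₗ[R] X}
    (hq : Function.Surjective q) :
    Subsingleton (Abelian.Ext (ModuleCat.of R X) (ModuleCat.of R Y) 1) ↔
      Function.Surjective (fun ψ : P →ₗ[R] Y => ψ.domRestrict (LinearMap.ker q)) := by
  have : Projective q.shortComplexKer.X₂ :=
    inferInstanceAs (Projective (ModuleCat.of R P))
  refine (subsingleton_ext_one_iff_surjective_precomp
    (LinearMap.shortExact_shortComplexKer hq) (ModuleCat.of R Y)).trans ?_
  rw [← ModuleCat.homEquiv.symm.surjective_comp, ← ModuleCat.homEquiv.comp_surjective]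
  rfl

end Restriction

instance projective_right (R : Type*) [Ring R] : Module.Projective Rᵐᵒᵖ R :=
  .of_equiv ({ opAddEquiv.symm with map_smul' := fun _ _ => rfl } : Rᵐᵒᵖ ≃ₗ[Rᵐᵒᵖ] R)

section TraceIdeal

variable {e : C}

variable (e) in
/-- The projection `C → C̄ = C/CeC`, as a map of right `C`-modules. -/
def cbarMkₗ : C →ₗ[Cᵐᵒᵖ] CBar e where
  toFun := cbarMk e
  map_add' := map_add _
  map_smul' c x := map_mul (cbarMk e) x c.unop

variable (e) in
/-- The trace ideal `CeC`, encoded as the right `C`-submodule of `C` generated by `Ce`. -/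
def traceIdeal : Submodule Cᵐᵒᵖ C :=
  Submodule.span Cᵐᵒᵖ (Set.range (Hand.val : Hand 1 e → C))

/-- The inclusion `Ce → CeC`. -/
def toTraceIdeal (x : Hand 1 e) : traceIdeal e :=
  ⟨x.val, Submodule.subset_span ⟨x, rfl⟩⟩

lemma span_range_toTraceIdeal :
    Submodule.span Cᵐᵒᵖ (Set.range (toTraceIdeal (e := e))) = ⊤ := by
  have hrange : Set.range (toTraceIdeal (e := e)) =
      ((↑) : traceIdeal e → C) ⁻¹' Set.range (Hand.val : Hand 1 e → C) := by
    ext x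
    simp only [toTraceIdeal, Set.mem_range, Set.mem_preimage, Subtype.ext_iff]
  rw [hrange]
  exact Submodule.span_span_coe_preimage

variable [Fact (IsIdempotentElem e)]

lemma cbarMk_val (x : Hand 1 e) : cbarMk e x.val = 0 := by
  rw [cbarMk_eq_zero_iff, ← Hand.right_absorb x]
  exact TwoSidedIdeal.mul_mem_left _ _ _ (TwoSidedIdeal.subset_span rfl)

lemma mul_mul_mem_traceIdeal (a b : C) : a * e * b ∈ traceIdeal e := by
  have hae : a * e ∈ traceIdeal e :=
    Submodule.subset_span ⟨Hand.compress 1 e a, by rw [Hand.val_compress, one_mul]⟩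
  exact Submodule.smul_mem _ (op b) hae

lemma ker_cbarMkₗ : LinearMap.ker (cbarMkₗ e) = traceIdeal e := by
  apply le_antisymm
  · intro x hx
    rw [LinearMap.mem_ker] at hx
    have hx' := TwoSidedIdeal.mem_span_iff_mem_addSubgroup_closure.1
      ((cbarMk_eq_zero_iff e x).1 hx)
    refine (AddSubgroup.closure_le (traceIdeal e).toAddSubgroup).2 ?_ hx'
    rintro _ ⟨_, ⟨a, -, _, rfl, rfl⟩, b, -, rfl⟩
    exact mul_mul_mem_traceIdeal a b
  · rw [traceIdeal, Submodule.span_le]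
    rintro _ ⟨x, rfl⟩
    exact cbarMk_val x

end TraceIdeal

lemma faithfulSMul_of_toModuleEnd_injective {R S M : Type*} [Semiring R] [Semiring S]
    [AddCommMonoid M] [Module R M] [Module S M] [SMulCommClass S R M]
    (h : Function.Injective (Module.toModuleEnd R (S := S) M)) : FaithfulSMul S M :=
  ⟨fun hs => h (LinearMap.ext hs)⟩

section RestrictToColumn

variable {e : C} [Fact (IsIdempotentElem e)]

instance : SMulCommClass C (Hand e e)ᵐᵒᵖ (Hand 1 e) where
  smul_comm c a x := Hand.val_injective (mul_assoc c x.val a.unop.val).symm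

lemma map_toTraceIdeal_mul (φ : traceIdeal e →ₗ[Cᵐᵒᵖ] C) (x : Hand 1 e) :
    φ (toTraceIdeal x) * e = φ (toTraceIdeal x) := by
  have hx : op e • toTraceIdeal x = toTraceIdeal x := Subtype.ext (Hand.right_absorb x)
  rw [← op_smul_eq_mul, ← map_smul, hx]

/-- The restriction `Hom_C(CeC, C) → End_{eCe}(Ce)`: a right `C`-linear map `CeC → C` sends `Ce`
into `Ce`. -/
def restrictToColumn (φ : traceIdeal e →ₗ[Cᵐᵒᵖ] C) :
    Module.End (Hand e e)ᵐᵒᵖ (Hand 1 e) where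
  toFun x := Hand.mk (φ (toTraceIdeal x)) (by rw [one_mul, map_toTraceIdeal_mul])
  map_add' x y := Hand.val_injective (map_add φ (toTraceIdeal x) (toTraceIdeal y))
  map_smul' a x := Hand.val_injective (map_smul φ (op a.unop.val) (toTraceIdeal x))

@[simp]
lemma val_restrictToColumn (φ : traceIdeal e →ₗ[Cᵐᵒᵖ] C) (x : Hand 1 e) :
    (restrictToColumn φ x).val = φ (toTraceIdeal x) :=
  rfl

lemma restrictToColumn_injective : Function.Injective (restrictToColumn (e := e)) := by
  intro φ φ' h
  refine LinearMap.ext_on_range span_range_toTraceIdeal fun x => ?_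
  exact congrArg Hand.val (LinearMap.congr_fun h x)

lemma map_val_smul (f : Module.End (Hand e e)ᵐᵒᵖ (Hand 1 e)) (x w : Hand 1 e) :
    f (x.val • w) = (f x).val • w := by
  have hmul (y : Hand 1 e) : y.val • w = op (Hand.compress e e w.val) • y := by
    apply Hand.val_injective
    rw [Hand.val_smul', Hand.val_op_smul, unop_op, Hand.val_compress, mul_assoc e,
      Hand.right_absorb, ← mul_assoc, Hand.right_absorb]
  rw [hmul, map_smul, hmul]

open Finsupp in
lemma map_linearCombination_smul (f : Module.End (Hand e e)ᵐᵒᵖ (Hand 1 e))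
    (s : Hand 1 e →₀ Cᵐᵒᵖ) (w : Hand 1 e) :
    f (linearCombination Cᵐᵒᵖ Hand.val s • w) =
      linearCombination Cᵐᵒᵖ (fun x => (f x).val) s • w := by
  induction s using Finsupp.induction_linear with
  | zero => simp
  | add s t hs ht => simp only [map_add, add_smul, hs, ht]
  | single x c =>
    simp only [linearCombination_single, MulOpposite.smul_eq_mul_unop, mul_smul,
      map_val_smul]

lemma restrictToColumn_surjective [FaithfulSMul C (Hand 1 e)] :
    Function.Surjective (restrictToColumn (e := e)) := by
  intro f
  let p := Finsupp.linearCombination Cᵐᵒᵖ (toTraceIdeal (e := e))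
  have hp : Function.Surjective p :=
    span_range_eq_top_iff_surjective_finsuppLinearCombination Cᵐᵒᵖ |>.1 span_range_toTraceIdeal
  obtain ⟨φ, hφ⟩ := exists_comp_eq_of_ker_le_ker hp
    (f := Finsupp.linearCombination Cᵐᵒᵖ fun x => (f x).val) fun s hs => by
      -- `∑ f(xᵢ)cᵢ` is zero when `∑ xᵢcᵢ` is: it sends `w ∈ Ce` to `f((∑ xᵢcᵢ)w)`, so kills `Ce`.
      have hs' : Finsupp.linearCombination Cᵐᵒᵖ Hand.val s = 0 :=
        (Finsupp.apply_linearCombination Cᵐᵒᵖ (traceIdeal e).subtype toTraceIdeal s).symm.trans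
          (congrArg Subtype.val hs)
      refine FaithfulSMul.eq_of_smul_eq_smul fun w : Hand 1 e => ?_
      rw [← map_linearCombination_smul, hs', zero_smul, map_zero]
  refine ⟨φ, LinearMap.ext fun x => Hand.val_injective ?_⟩
  simpa [p] using LinearMap.congr_fun hφ (Finsupp.single x 1)

lemma toModuleEnd_eq_comp :
    ⇑(Module.toModuleEnd (Hand e e)ᵐᵒᵖ (S := C) (Hand 1 e)) =
      restrictToColumn ∘ (fun ψ : C →ₗ[Cᵐᵒᵖ] C => ψ.domRestrict (traceIdeal e)) ∘
        RingEquiv.moduleEndSelfOp C :=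
  rfl

lemma toModuleEnd_injective_iff :
    Function.Injective (Module.toModuleEnd (Hand e e)ᵐᵒᵖ (S := C) (Hand 1 e)) ↔
      Function.Injective (fun ψ : C →ₗ[Cᵐᵒᵖ] C => ψ.domRestrict (traceIdeal e)) := by
  rw [toModuleEnd_eq_comp, restrictToColumn_injective.of_comp_iff,
    Function.Injective.of_comp_iff' _ (RingEquiv.moduleEndSelfOp C).bijective]

lemma toModuleEnd_bijective_iff :
    Function.Bijective (Module.toModuleEnd (Hand e e)ᵐᵒᵖ (S := C) (Hand 1 e)) ↔
      Function.Bijective (fun ψ : C →ₗ[Cᵐᵒᵖ] C => ψ.domRestrict (traceIdeal e)) := by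
  rw [Function.Bijective, Function.Bijective, ← toModuleEnd_injective_iff]
  refine and_congr_right fun hinj => ?_
  have := faithfulSMul_of_toModuleEnd_injective hinj
  have hrestrict : Function.Bijective (restrictToColumn (e := e)) :=
    ⟨restrictToColumn_injective, restrictToColumn_surjective⟩
  rw [toModuleEnd_eq_comp, Function.Surjective.of_comp_iff' hrestrict,
    Function.Surjective.of_comp_iff _ (RingEquiv.moduleEndSelfOp C).surjective]

end RestrictToColumn

/-- For a Morita context `(C, e)` with `A = eCe`, the canonical ring
homomorphism `α : C → End_A(Ce)` (left multiplication on the right `A`-module `Ce`, where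
`Ce ≅ M ⊕ A`) is injective iff `Hom_C(C̄, C) = 0` iff `grade_C C̄ ≥ 1`, and bijective iff
`Ext^i_C(C̄, C) = 0` for `i = 0, 1` iff `grade_C C̄ ≥ 2`. -/
theorem auslander_context_criterion
    (C : Type) [Ring C] (e : C) [Fact (IsIdempotentElem e)]
    (α : C →+* Module.End (Hand e e)ᵐᵒᵖ (Hand (1 : C) e))
    (hα : ∀ (c : C) (x : Hand (1 : C) e), (α c x).val = c * x.val) :
    (Function.Injective α ↔ Subsingleton (CBar e →ₗ[Cᵐᵒᵖ] C))
    ∧ (Function.Injective α ↔ 1 ≤ rgrade C (CBar e))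
    ∧ (Function.Bijective α ↔
        (Subsingleton (Abelian.Ext (ModuleCat.of Cᵐᵒᵖ (CBar e)) (ModuleCat.of Cᵐᵒᵖ C) 0) ∧
         Subsingleton (Abelian.Ext (ModuleCat.of Cᵐᵒᵖ (CBar e)) (ModuleCat.of Cᵐᵒᵖ C) 1)))
    ∧ (Function.Bijective α ↔ 2 ≤ rgrade C (CBar e)) := by
  obtain rfl : α = Module.toModuleEnd (Hand e e)ᵐᵒᵖ (Hand 1 e) :=
    RingHom.ext fun c => LinearMap.ext fun x => Hand.val_injective (hα c x)
  have hq : Function.Surjective (cbarMkₗ e) := cbarMk_surjective e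
  have hHom := subsingleton_linearMap_iff_injective_domRestrict hq C
  have hExt := subsingleton_ext_one_iff_surjective_domRestrict C hq
  rw [ker_cbarMkₗ] at hHom hExt
  rw [one_le_rgrade_iff, two_le_rgrade_iff, subsingleton_ext_zero_iff_subsingleton_linearMap,
    hHom, hExt, toModuleEnd_injective_iff, toModuleEnd_bijective_iff]
  exact ⟨.rfl, .rfl, .rfl, .rfl⟩

end MoritaHochschild
end
end

section
/- Let A be a ring and M an A-generator (a right A-module such that A is a direct summand of a finite direct sum of copies of M). Let g be the grade of the stable endomorphism ring End̲_A(M) as a right module over End_A(M). Then g = 1 + inf{ 1 ≤ i ≤ ∞ : Ext^i_A(M,M) ≠ 0 } ≥ 2; equivalently, g ≥ 2 always, and for 1 ≤ i ≤ g−2 one has Ext^i_A(M,M) = 0 while Ext^{g−1}_A(M,M) ≠ 0 when g is finite. Moreover, if g is finite then Ext^g_{End_A(M)}(End̲_A(M), End_A(M)) ≅ Ext^{g−1}_A(M,M). -/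
open CategoryTheory MulOpposite

attribute [local instance] HasDerivedCategory.standard
attribute [local instance] CategoryTheory.hasExt_of_hasDerivedCategory

set_option maxHeartbeats 1000000
set_option synthInstance.maxHeartbeats 400000

noncomputable section
namespace MoritaHochschild

/-! ### Generators and finite projectives -/

/-- A right `R`-module `X` is a generator if `R` is a direct summand of a finite
direct sum of copies of `X`. -/
def IsRGenerator (R : Type) [Ring R] (X : Type) [AddCommGroup X] [Module Rᵐᵒᵖ X] : Prop :=
  ∃ (k : ℕ) (p : (Fin k → X) →ₗ[Rᵐᵒᵖ] R) (s : R →ₗ[Rᵐᵒᵖ] (Fin k → X)),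
    p.comp s = LinearMap.id

/-- A left `R`-module `X` is a generator if `R` is a direct summand of a finite
direct sum of copies of `X`. -/
def IsLGenerator (R : Type) [Ring R] (X : Type) [AddCommGroup X] [Module R X] : Prop :=
  ∃ (k : ℕ) (p : (Fin k → X) →ₗ[R] R) (s : R →ₗ[R] (Fin k → X)),
    p.comp s = LinearMap.id


/-- The two-sided ideal of `End_A(M)` of endomorphisms factoring through a finitely
generated projective (equivalently finite free) module: the ideal generated by the
rank-one endomorphisms `m' ↦ m · λ(m')`, i.e. the image of the norm map
`M ⊗_A Hom_A(M, A) → End_A(M)`. -/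
def projectivelyTrivialIdeal (A : Type) [Ring A] (M : Type) [AddCommGroup M]
    [Module Aᵐᵒᵖ M] : TwoSidedIdeal (Module.End Aᵐᵒᵖ M) :=
  TwoSidedIdeal.span
    {φ : Module.End Aᵐᵒᵖ M | ∃ (lam : M →ₗ[Aᵐᵒᵖ] A) (m : M), ∀ x : M, φ x = (op (lam x)) • m}

/-- The stable endomorphism ring `End̲_A(M)`, the cokernel of the norm map. -/
def StableEnd (A : Type) [Ring A] (M : Type) [AddCommGroup M] [Module Aᵐᵒᵖ M] : Type :=
  (projectivelyTrivialIdeal A M).ringCon.Quotient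

instance (A : Type) [Ring A] (M : Type) [AddCommGroup M] [Module Aᵐᵒᵖ M] :
    Ring (StableEnd A M) :=
  inferInstanceAs (Ring (projectivelyTrivialIdeal A M).ringCon.Quotient)

/-- The quotient map onto the stable endomorphism ring. -/
def stableEndMk (A : Type) [Ring A] (M : Type) [AddCommGroup M] [Module Aᵐᵒᵖ M] :
    Module.End Aᵐᵒᵖ M →+* StableEnd A M :=
  RingCon.mk' (projectivelyTrivialIdeal A M).ringCon

/-- The stable endomorphism ring as a right module over the endomorphism ring. -/
instance (A : Type) [Ring A] (M : Type) [AddCommGroup M] [Module Aᵐᵒᵖ M] :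
    Module (Module.End Aᵐᵒᵖ M)ᵐᵒᵖ (StableEnd A M) :=
  Module.compHom (StableEnd A M) (RingHom.op (stableEndMk A M))

/-!
Let `E = End G`, let `F = Hom(G, -)`, with values in right `E`-modules, and let `X = E / I`, where
`I` consists of the endomorphisms that factor through finitely generated projectives. As `G` is a
generator, `F` preserves injectives (Gabriel–Popescu) and `I · G = G`, so that `Hom(X, F Z) = 0`
for all `Z` and `Ext X (F J) = 0` in all degrees for `J` injective. Embed `Z` into an injective `J`
with quotient `Z'`. The left exact sequence `0 → F Z → F J → F Z'` has cokernel `Ext¹(G, Z)`, which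
is killed by `I`, so dimension shifting gives `Ext¹(X, F Z) = 0` and
`Ext²(X, F Z) ≃ Hom(X, Ext¹(G, Z)) ≃ Ext¹(G, Z)`. If `Ext¹(G, Z) = 0`, then `F` is exact on the
sequence and both sides can be shifted from `Z` to `Z'`; the theorem is the case `Z = G`.
-/

universe w w' v v' u u'

open Abelian Limits ZeroObject

section Shift

variable {D : Type u'} [Category.{v'} D] [Abelian D]

lemma shortExact_image_ι {Y Z : D} (g : Y ⟶ Z) :
    (ShortComplex.mk (Abelian.image.ι g) (cokernel.π g) (kernel.condition _)).ShortExact where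
  exact := ShortComplex.exact_kernel _

lemma comp_abelianFactorThruImage_eq_zero {W Y Z : D} {f : W ⟶ Y} {g : Y ⟶ Z} (h : f ≫ g = 0) :
    f ≫ Abelian.factorThruImage g = 0 :=
  zero_of_comp_mono (Abelian.image.ι g) (by simpa using h)

lemma shortExact_factorThruImage {T : ShortComplex D} (hT : T.Exact) [Mono T.f] :
    (ShortComplex.mk T.f (Abelian.factorThruImage T.g)
      (comp_abelianFactorThruImage_eq_zero T.zero)).ShortExact where
  exact := by
    let φ : ShortComplex.mk T.f (Abelian.factorThruImage T.g)
        (comp_abelianFactorThruImage_eq_zero T.zero) ⟶ T :=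
      { τ₁ := 𝟙 _, τ₂ := 𝟙 _, τ₃ := Abelian.image.ι T.g }
    have : Epi φ.τ₁ := inferInstanceAs (Epi (𝟙 _))
    have : IsIso φ.τ₂ := inferInstanceAs (IsIso (𝟙 _))
    have : Mono φ.τ₃ := inferInstanceAs (Mono (Abelian.image.ι T.g))
    exact (ShortComplex.exact_iff_of_epi_of_isIso_of_mono φ).2 hT

variable [HasExt.{w'} D] {X : D}

lemma subsingleton_ext_zero_iff_s11 {Y : D} :
    Subsingleton (Ext X Y 0) ↔ Subsingleton (X ⟶ Y) :=
  Ext.homEquiv₀.subsingleton_congr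

/-- The isomorphism induced on `Ext X _ n` by an isomorphism of the second variable. -/
def extCongrRight {Y Y' : D} (e : Y ≅ Y') (n : ℕ) : Ext X Y n ≃+ Ext X Y' n :=
  ((extFunctorObj X n).mapIso e).addCommGroupIsoToAddEquiv

lemma bijective_postcomp_extClass {S : ShortComplex D} (hS : S.ShortExact) {n : ℕ}
    (h₀ : Subsingleton (Ext X S.X₂ n)) (h₁ : Subsingleton (Ext X S.X₂ (n + 1))) :
    Function.Bijective (hS.extClass.postcomp X (rfl : n + 1 = n + 1)) := by
  refine ⟨(injective_iff_map_eq_zero _).2 fun x hx ↦ ?_, fun x ↦ ?_⟩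
  · obtain ⟨y, rfl⟩ := Ext.covariant_sequence_exact₃ X hS x rfl hx
    rw [Subsingleton.elim y 0, Ext.zero_comp]
  · exact Ext.covariant_sequence_exact₁ X hS x (Subsingleton.elim _ _) rfl

/-- Dimension shifting along a short exact sequence whose middle term is acyclic for
`Ext X` in the two degrees involved. -/
def extShiftEquiv {S : ShortComplex D} (hS : S.ShortExact) {n : ℕ}
    (h₀ : Subsingleton (Ext X S.X₂ n)) (h₁ : Subsingleton (Ext X S.X₂ (n + 1))) :
    Ext X S.X₃ n ≃+ Ext X S.X₁ (n + 1) :=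
  AddEquiv.ofBijective _ (bijective_postcomp_extClass hS h₀ h₁)

lemma subsingleton_ext_one_of_exact {T : ShortComplex D} (hT : T.Exact) [Mono T.f]
    (h₂ : Subsingleton (Ext X T.X₂ 0)) (h₂' : Subsingleton (Ext X T.X₂ 1))
    (h₃ : Subsingleton (X ⟶ T.X₃)) : Subsingleton (Ext X T.X₁ 1) := by
  have h : Subsingleton (X ⟶ Abelian.image T.g) :=
    ⟨fun f g ↦ by rw [← cancel_mono (Abelian.image.ι T.g)]; exact h₃.elim _ _⟩
  exact (extShiftEquiv (shortExact_factorThruImage hT) h₂ h₂').symm.subsingleton_congr.2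
    (subsingleton_ext_zero_iff_s11.2 h)

/-- Dimension shifting by two along an exact sequence
`0 → T.X₁ → T.X₂ → T.X₃ → cokernel T.g → 0`. -/
def extShiftTwoEquiv {T : ShortComplex D} (hT : T.Exact) [Mono T.f] {n : ℕ}
    (h₂ : Subsingleton (Ext X T.X₂ (n + 1))) (h₂' : Subsingleton (Ext X T.X₂ (n + 2)))
    (h₃ : Subsingleton (Ext X T.X₃ n)) (h₃' : Subsingleton (Ext X T.X₃ (n + 1))) :
    Ext X (cokernel T.g) n ≃+ Ext X T.X₁ (n + 2) :=
  (extShiftEquiv (shortExact_image_ι T.g) h₃ h₃').trans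
    (extShiftEquiv (shortExact_factorThruImage hT) h₂ h₂')

end Shift

section LeftExact

variable {C : Type u} [Category.{v} C] {D : Type u'} [Category.{v'} D] [Abelian D]

lemma subsingleton_ext_obj_of_injective [HasExt.{w'} D] {F : C ⥤ D} [F.PreservesInjectiveObjects]
    {X : D} (hX : ∀ Z, Subsingleton (X ⟶ F.obj Z)) (J : C) [Injective J] :
    ∀ n, Subsingleton (Ext X (F.obj J) n)
  | 0 => subsingleton_ext_zero_iff_s11.2 (hX J)
  | n + 1 => Ext.subsingleton_of_injective _ _ n

variable [Abelian C]

lemma exists_shortExact_injective_s11 [EnoughInjectives C] (Z : C) :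
    ∃ S : ShortComplex C, S.ShortExact ∧ Injective S.X₂ ∧ S.X₁ = Z :=
  ⟨ShortComplex.mk (Injective.ι Z) (cokernel.π (Injective.ι Z)) (cokernel.condition _),
    { exact := ShortComplex.exact_cokernel _ }, Injective.injective_under Z, rfl⟩

section

variable (F : C ⥤ D) [F.Additive] [PreservesFiniteLimits F] {S : ShortComplex C}

lemma exact_map_of_shortExact (hS : S.ShortExact) : (S.map F).Exact :=
  hS.exact.map_of_mono_of_preservesKernel F hS.mono_f inferInstance

lemma mono_map_f_of_shortExact (hS : S.ShortExact) : Mono (S.map F).f :=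
  have := hS.mono_f
  inferInstanceAs (Mono (F.map S.f))

end

variable [HasExt.{w'} D] {F : C ⥤ D} [F.PreservesInjectiveObjects] [F.Additive]
  [PreservesFiniteLimits F] {X : D} (hX : ∀ Z, Subsingleton (X ⟶ F.obj Z))

include hX in
lemma subsingleton_ext_one_obj [EnoughInjectives C] (Z : C) :
    Subsingleton (Ext X (F.obj Z) 1) := by
  obtain ⟨S, hS, _, rfl⟩ := exists_shortExact_injective_s11 Z
  have := mono_map_f_of_shortExact F hS
  have hJ := subsingleton_ext_obj_of_injective hX S.X₂
  exact subsingleton_ext_one_of_exact (exact_map_of_shortExact F hS) (hJ 0) (hJ 1) (hX S.X₃)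

/-- For `S` short exact with injective middle term, `Ext² X (F S.X₁)` measures through `X` the
failure of `F` to be exact on `S`. -/
def extTwoObjEquiv [EnoughInjectives C] {S : ShortComplex C} (hS : S.ShortExact)
    [Injective S.X₂] : Ext X (F.obj S.X₁) 2 ≃+ (X ⟶ cokernel (F.map S.g)) :=
  have := mono_map_f_of_shortExact F hS
  have hJ := subsingleton_ext_obj_of_injective hX S.X₂
  (extShiftTwoEquiv (exact_map_of_shortExact F hS) (hJ 1) (hJ 2)
    (subsingleton_ext_zero_iff_s11.2 (hX S.X₃)) (subsingleton_ext_one_obj hX S.X₃)).symm.trans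
      Ext.addEquiv₀

/-- Dimension shifting along the image under `F` of a short exact sequence with injective middle
term, when that image is again short exact. -/
def extObjShiftEquiv {S : ShortComplex C} (hS : S.ShortExact) [Injective S.X₂]
    [Epi (F.map S.g)] (n : ℕ) : Ext X (F.obj S.X₃) n ≃+ Ext X (F.obj S.X₁) (n + 1) :=
  have : Epi (S.map F).g := inferInstanceAs (Epi (F.map S.g))
  have := mono_map_f_of_shortExact F hS
  have hJ := subsingleton_ext_obj_of_injective hX S.X₂
  extShiftEquiv { exact := exact_map_of_shortExact F hS } (hJ n) (hJ (n + 1))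

end LeftExact

section Connecting

variable {C : Type u} [Category.{v} C] [Abelian C] [HasExt.{w} C] (G : C)

/-- The connecting homomorphism `Hom(G, S.X₃) → Ext¹(G, S.X₁)` of a short exact sequence. -/
def extConnecting {S : ShortComplex C} (hS : S.ShortExact) : (G ⟶ S.X₃) →+ Ext G S.X₁ 1 :=
  (hS.extClass.postcomp G (zero_add 1)).comp Ext.addEquiv₀.symm.toAddMonoidHom

variable {S : ShortComplex C} (hS : S.ShortExact)

lemma extConnecting_eq_zero_iff {q : G ⟶ S.X₃} :
    extConnecting G hS q = 0 ↔ ∃ r : G ⟶ S.X₂, r ≫ S.g = q := by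
  change (Ext.mk₀ q).comp hS.extClass (zero_add 1) = 0 ↔ _
  constructor
  · intro hq
    obtain ⟨x, hx⟩ := Ext.covariant_sequence_exact₃ G hS _ (zero_add 1) hq
    obtain ⟨r, rfl⟩ := (Ext.mk₀_bijective _ _).2 x
    exact ⟨r, (Ext.mk₀_bijective _ _).1 (by rw [← Ext.mk₀_comp_mk₀, hx])⟩
  · rintro ⟨r, rfl⟩
    rw [← Ext.mk₀_comp_mk₀, Ext.comp_assoc_of_second_deg_zero, hS.comp_extClass, Ext.comp_zero]

lemma extConnecting_surjective [Injective S.X₂] :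
    Function.Surjective (extConnecting G hS) := fun x ↦ by
  obtain ⟨y, hy⟩ := Ext.covariant_sequence_exact₁ G hS x (Ext.eq_zero_of_injective _) (zero_add 1)
  obtain ⟨q, rfl⟩ := (Ext.mk₀_bijective _ _).2 y
  exact ⟨q, hy⟩

end Connecting

section FactorsThroughProjective

variable {C : Type u} [Category.{v} C] {X Y Z : C}

/-- The morphisms that vanish in the stable category of `C`. No finiteness is imposed on the
projective. -/
def FactorsThroughProjective (f : X ⟶ Y) : Prop :=
  ∃ (P : C) (_ : Projective P) (i : X ⟶ P) (p : P ⟶ Y), i ≫ p = f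

namespace FactorsThroughProjective

lemma comp_left {f : X ⟶ Y} (hf : FactorsThroughProjective f) {W : C} (g : W ⟶ X) :
    FactorsThroughProjective (g ≫ f) := by
  obtain ⟨P, hP, i, p, rfl⟩ := hf
  exact ⟨P, hP, g ≫ i, p, Category.assoc _ _ _⟩

lemma comp_right {f : X ⟶ Y} (hf : FactorsThroughProjective f) (g : Y ⟶ Z) :
    FactorsThroughProjective (f ≫ g) := by
  obtain ⟨P, hP, i, p, rfl⟩ := hf
  exact ⟨P, hP, i, p ≫ g, (Category.assoc _ _ _).symm⟩

lemma exists_lift {f : X ⟶ Y} (hf : FactorsThroughProjective f) {W : C} (v : W ⟶ Z) [Epi v]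
    (q : Y ⟶ Z) : ∃ r : X ⟶ W, r ≫ v = f ≫ q := by
  obtain ⟨P, _, i, p, rfl⟩ := hf
  exact ⟨i ≫ Projective.factorThru (p ≫ q) v, by simp⟩

variable [Abelian C]

lemma zero : FactorsThroughProjective (0 : X ⟶ Y) :=
  ⟨0, inferInstance, 0, 0, comp_zero⟩

lemma neg {f : X ⟶ Y} (hf : FactorsThroughProjective f) : FactorsThroughProjective (-f) := by
  obtain ⟨P, hP, i, p, rfl⟩ := hf
  exact ⟨P, hP, -i, p, Preadditive.neg_comp _ _⟩

lemma add {f g : X ⟶ Y} (hf : FactorsThroughProjective f) (hg : FactorsThroughProjective g) :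
    FactorsThroughProjective (f + g) := by
  obtain ⟨P, _, i, p, rfl⟩ := hf
  obtain ⟨Q, _, j, q, rfl⟩ := hg
  exact ⟨P ⊞ Q, inferInstance, biprod.lift i j, biprod.desc p q, biprod.lift_desc⟩

end FactorsThroughProjective

end FactorsThroughProjective

section CyclicModule

lemma bijective_eval_of_span_eq_top {R X N : Type*} [Ring R] [AddCommGroup X] [Module R X]
    [AddCommGroup N] [Module R N] {x : X} (hx : Submodule.span R {x} = ⊤)
    (hN : ∀ r : R, r • x = 0 → ∀ n : N, r • n = 0) :
    Function.Bijective fun h : X →ₗ[R] N ↦ h x := by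
  have hsurj : Function.Surjective (LinearMap.toSpanSingleton R X x) := by
    rwa [← LinearMap.range_eq_top, LinearMap.range_toSpanSingleton]
  refine ⟨fun h h' hh ↦ LinearMap.ext_on_range (v := fun _ : Unit ↦ x) (by simpa) fun _ ↦ hh,
    fun n ↦ ?_⟩
  have hker : LinearMap.ker (LinearMap.toSpanSingleton R X x) ≤
      LinearMap.ker (LinearMap.toSpanSingleton R N n) := fun r hr ↦ hN r hr n
  let e := (LinearMap.toSpanSingleton R X x).quotKerEquivOfSurjective hsurj
  refine ⟨((LinearMap.ker (LinearMap.toSpanSingleton R X x)).liftQ _ hker) ∘ₗ e.symm, ?_⟩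
  have symm_apply : e.symm x = Submodule.Quotient.mk 1 := by
    rw [LinearEquiv.symm_apply_eq]; simp [e]
  simp [symm_apply]

end CyclicModule

section HomFunctor

variable {C : Type u} [Category.{v} C] [Abelian C] {G : C} {E : Type v} [Ring E]

/-- The functor `Hom(G, -)` with values in modules over a ring `E` identified with `(End G)ᵐᵒᵖ`.
The identification is kept explicit because `Module.End` and the categorical `End` are different
types. -/
def homFunctor (φ : E ≃+* (End G)ᵐᵒᵖ) : C ⥤ ModuleCat.{v} E :=
  preadditiveCoyonedaObj G ⋙ ModuleCat.restrictScalars φ.toRingHom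

variable (φ : E ≃+* (End G)ᵐᵒᵖ)

instance : (homFunctor φ).Additive := by
  unfold homFunctor; infer_instance

instance : PreservesFiniteLimits (homFunctor φ) := by
  have := preservesLimits_preadditiveCoyonedaObj G
  exact comp_preservesFiniteLimits _ _

instance [(preadditiveCoyonedaObj G).PreservesInjectiveObjects] :
    (homFunctor φ).PreservesInjectiveObjects := by
  have := ModuleCat.restrictScalars_isEquivalence_of_ringEquiv.{v} φ
  have := Functor.preservesInjectiveObjects_of_isEquivalence
    (F := ModuleCat.restrictScalars.{v} φ.toRingHom)
  exact Functor.preservesInjectiveObjects_comp _ _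

end HomFunctor

section StableQuotient

lemma cokernel_π_apply_eq_zero_iff {R : Type u} [Ring R] {N N' : ModuleCat.{v} R} (f : N ⟶ N')
    {n : N'} : cokernel.π f n = 0 ↔ ∃ m, f m = n := by
  refine ⟨(ShortComplex.moduleCat_exact_iff _).1 (ShortComplex.exact_cokernel f) n, ?_⟩
  rintro ⟨m, rfl⟩
  exact cokernel.condition_apply f m

variable {C : Type u} [Category.{v} C] [Abelian C] {G : C} {E : Type v} [Ring E]
  (φ : E ≃+* (End G)ᵐᵒᵖ)

/-- `x` presents `X` as the quotient of `E ≃ End G` by a set of endomorphisms which factor through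
projectives and are jointly epimorphic. The stable endomorphism ring of a generator `G`, with
`x = 1`, is the example to keep in mind. -/
structure IsStableQuotient {X : ModuleCat.{v} E} (x : X) : Prop where
  span_eq_top : Submodule.span E {x} = ⊤
  factorsThroughProjective (a : E) : a • x = 0 → FactorsThroughProjective (φ a).unop
  eq_zero {Z : C} (q : G ⟶ Z) : (∀ a : E, a • x = 0 → (φ a).unop ≫ q = 0) → q = 0

/-- The cokernel of `Hom(G, S.X₂) → Hom(G, S.X₃)` is `Ext¹(G, S.X₁)`. -/
def cokernelHomFunctorMapEquiv [HasExt.{w} C] {S : ShortComplex C} (hS : S.ShortExact)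
    [Injective S.X₂] :
    (cokernel ((homFunctor φ).map S.g) : ModuleCat E) ≃+ Ext G S.X₁ 1 :=
  let π : (G ⟶ S.X₃) →+ (cokernel ((homFunctor φ).map S.g) : ModuleCat E) :=
    (cokernel.π ((homFunctor φ).map S.g)).hom.toAddMonoidHom
  have hπ : Function.Surjective π := (ModuleCat.epi_iff_surjective _).1 inferInstance
  have hker : π.ker = (extConnecting G hS).ker := AddSubgroup.ext fun q ↦
    (cokernel_π_apply_eq_zero_iff ((homFunctor φ).map S.g) (n := q)).trans
      (extConnecting_eq_zero_iff G hS).symm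
  (QuotientAddGroup.quotientKerEquivOfSurjective π hπ).symm.trans <|
    (QuotientAddGroup.quotientAddEquivOfEq hker).trans <|
      QuotientAddGroup.quotientKerEquivOfSurjective _ (extConnecting_surjective G hS)

lemma epi_homFunctor_map [HasExt.{w} C] {S : ShortComplex C} (hS : S.ShortExact)
    [Injective S.X₂] (h : Subsingleton (Ext G S.X₁ 1)) : Epi ((homFunctor φ).map S.g) := by
  have := (cokernelHomFunctorMapEquiv φ hS).subsingleton_congr.2 h
  exact Preadditive.epi_of_cokernel_zero ((ModuleCat.isZero_of_subsingleton _).eq_of_tgt _ _)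

namespace IsStableQuotient

variable {φ} {X : ModuleCat.{v} E} {x : X} (hx : IsStableQuotient φ x)

include hx

lemma subsingleton_hom (Z : C) : Subsingleton (X ⟶ (homFunctor φ).obj Z) := by
  refine ⟨fun f g ↦ ModuleCat.hom_ext
    (LinearMap.ext_on_range (v := fun _ : Unit ↦ x) (by simpa using hx.span_eq_top) fun _ ↦ ?_)⟩
  have h := hx.eq_zero (show G ⟶ Z from (f - g).hom x) fun a ha ↦ by
    change a • (f - g).hom x = 0
    rw [← map_smul, ha, map_zero]
  exact sub_eq_zero.1 h

lemma smul_cokernel_eq_zero {Z Z' : C} (v : Z ⟶ Z') [Epi v] {a : E} (ha : a • x = 0)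
    (n : (cokernel ((homFunctor φ).map v) : ModuleCat E)) : a • n = 0 := by
  obtain ⟨q, rfl⟩ := (ModuleCat.epi_iff_surjective (cokernel.π ((homFunctor φ).map v))).1
    inferInstance n
  rw [← map_smul, cokernel_π_apply_eq_zero_iff]
  exact (hx.factorsThroughProjective a ha).exists_lift v q

/-- Evaluation at the generator of `X` identifies the morphisms from `X` to the cokernel of
`Hom(G, S.g)` with that cokernel, which is `Ext¹(G, S.X₁)`. -/
def homCokernelEquiv [HasExt.{w} C] {S : ShortComplex C} (hS : S.ShortExact) [Injective S.X₂] :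
    (X ⟶ cokernel ((homFunctor φ).map S.g)) ≃+ Ext G S.X₁ 1 :=
  have := hS.epi_g
  let ev : (X →ₗ[E] (cokernel ((homFunctor φ).map S.g) : ModuleCat E)) →+
      (cokernel ((homFunctor φ).map S.g) : ModuleCat E) :=
    LinearMap.evalAddMonoidHom x
  have hev : Function.Bijective ev := bijective_eval_of_span_eq_top hx.span_eq_top
    fun _ ↦ hx.smul_cokernel_eq_zero S.g
  ModuleCat.homAddEquiv.trans <| (AddEquiv.ofBijective ev hev).trans <|
    cokernelHomFunctorMapEquiv φ hS

variable [EnoughInjectives C] [HasExt.{w} C] [HasExt.{w'} (ModuleCat.{v} E)]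
  [(preadditiveCoyonedaObj G).PreservesInjectiveObjects]

lemma nonempty_extTwo_addEquiv (Z : C) :
    Nonempty (Ext X ((homFunctor φ).obj Z) 2 ≃+ Ext G Z 1) := by
  obtain ⟨S, hS, _, rfl⟩ := exists_shortExact_injective_s11 Z
  exact ⟨(extTwoObjEquiv hx.subsingleton_hom hS).trans (hx.homCokernelEquiv hS)⟩

theorem subsingleton_ext_and_nonempty_addEquiv (n : ℕ) (Z : C)
    (hZ : ∀ j, 1 ≤ j → j ≤ n → Subsingleton (Ext G Z j)) :
    (∀ i ≤ n + 1, Subsingleton (Ext X ((homFunctor φ).obj Z) i)) ∧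
      Nonempty (Ext X ((homFunctor φ).obj Z) (n + 2) ≃+ Ext G Z (n + 1)) := by
  have h₀ (Z : C) : Subsingleton (Ext X ((homFunctor φ).obj Z) 0) :=
    subsingleton_ext_zero_iff_s11.2 (hx.subsingleton_hom Z)
  induction n generalizing Z with
  | zero =>
    refine ⟨fun i hi ↦ ?_, hx.nonempty_extTwo_addEquiv Z⟩
    obtain rfl | rfl : i = 0 ∨ i = 1 := by lia
    · exact h₀ Z
    · exact subsingleton_ext_one_obj hx.subsingleton_hom Z
  | succ n ih =>
    obtain ⟨S, hS, _, rfl⟩ := exists_shortExact_injective_s11 Z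
    have := epi_homFunctor_map φ hS (hZ 1 le_rfl (by lia))
    have shiftG (j : ℕ) : Ext G S.X₃ (j + 1) ≃+ Ext G S.X₁ (j + 1 + 1) :=
      extShiftEquiv hS (Ext.subsingleton_of_injective _ _ _) (Ext.subsingleton_of_injective _ _ _)
    have shiftX (i : ℕ) := extObjShiftEquiv hx.subsingleton_hom hS i
    obtain ⟨hlt, ⟨e⟩⟩ := ih S.X₃ fun j hj hjn ↦ by
      obtain ⟨j, rfl⟩ := Nat.exists_eq_add_of_le' hj
      exact (shiftG j).subsingleton_congr.2 (hZ (j + 1 + 1) (by lia) (by lia))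
    refine ⟨fun i hi ↦ ?_, ⟨(shiftX (n + 2)).symm.trans (e.trans (shiftG n))⟩⟩
    cases i with
    | zero => exact h₀ S.X₁
    | succ i => exact (shiftX i).subsingleton_congr.1 (hlt i (by lia))

end IsStableQuotient

end StableQuotient

section Grade

lemma sInf_natCast_eq_iff {P : ℕ → Prop} {n : ℕ} :
    sInf {i : ℕ∞ | ∃ m : ℕ, i = m ∧ P m} = n ↔ P n ∧ ∀ m < n, ¬ P m := by
  constructor
  · intro h
    have hne : {i : ℕ∞ | ∃ m : ℕ, i = m ∧ P m}.Nonempty := by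
      by_contra hempty
      simp [Set.not_nonempty_iff_eq_empty.1 hempty] at h
    obtain ⟨m, hm, hPm⟩ := h ▸ csInf_mem hne
    refine ⟨Nat.cast_injective hm ▸ hPm, fun k hk hPk ↦ hk.not_ge ?_⟩
    exact_mod_cast h ▸ sInf_le (show (k : ℕ∞) ∈ {i : ℕ∞ | ∃ m : ℕ, i = m ∧ P m} from ⟨k, rfl, hPk⟩)
  · rintro ⟨hPn, hmin⟩
    refine le_antisymm (sInf_le ⟨n, rfl, hPn⟩) (le_sInf ?_)
    rintro _ ⟨m, rfl, hPm⟩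
    exact_mod_cast not_lt.1 fun hmn ↦ hmin m hmn hPm

lemma sInf_natCast_eq_one_add {P Q : ℕ → Prop} (hQ : ¬ Q 0)
    (h : ∀ n, (∀ j ≤ n, ¬ Q j) → (∀ i ≤ n + 1, ¬ P i) ∧ (P (n + 2) ↔ Q (n + 1))) :
    sInf {i : ℕ∞ | ∃ n : ℕ, i = n ∧ P n} = 1 + sInf {i : ℕ∞ | ∃ n : ℕ, i = n ∧ Q n} := by
  classical
  by_cases hex : ∃ n, Q n
  · obtain ⟨m, hm⟩ := Nat.exists_eq_add_one_of_ne_zero fun h₀ ↦ hQ (h₀ ▸ Nat.find_spec hex)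
    have hQm : Q (m + 1) := hm ▸ Nat.find_spec hex
    have hmin (j : ℕ) (hj : j < m + 1) : ¬ Q j := Nat.find_min hex (by lia)
    obtain ⟨hlt, hiff⟩ := h m fun j hj ↦ hmin j (by lia)
    rw [sInf_natCast_eq_iff.2 ⟨hQm, hmin⟩,
      sInf_natCast_eq_iff.2 ⟨hiff.2 hQm, fun i hi ↦ hlt i (by lia)⟩]
    push_cast
    ring
  · have hP (n : ℕ) : ¬ P n := (h n fun j _ hj ↦ hex ⟨j, hj⟩).1 n (by lia)
    simp [hP, not_exists.1 hex]

/-- The grade of `X` with respect to `Y`: the least degree in which `Ext X Y` does not vanish. -/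
def extGrade {D : Type u} [Category.{v} D] [Abelian D] [HasExt.{w} D] (X Y : D) : ℕ∞ :=
  sInf {i : ℕ∞ | ∃ n : ℕ, i = n ∧ ¬ Subsingleton (Ext X Y n)}

theorem grade_of_stable_endomorphism_ring_general {C : Type u} [Category.{v} C] [Abelian C]
    [EnoughInjectives C] [HasExt.{w} C] {G : C}
    [(preadditiveCoyonedaObj G).PreservesInjectiveObjects] {E : Type v} [Ring E]
    [HasExt.{w'} (ModuleCat.{v} E)] {φ : E ≃+* (End G)ᵐᵒᵖ} {X N : ModuleCat.{v} E} {x : X}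
    (hx : IsStableQuotient φ x) {Z : C} (e : N ≅ (homFunctor φ).obj Z) :
    2 ≤ extGrade X N ∧
      extGrade X N =
        1 + sInf {i : ℕ∞ | ∃ n : ℕ, i = n ∧ 1 ≤ n ∧ ¬ Subsingleton (Ext G Z n)} ∧
      ∀ g : ℕ, extGrade X N = g → Nonempty (Ext X N g ≃+ Ext G Z (g - 1)) := by
  have key (n : ℕ) (hZ : ∀ j ≤ n, ¬ (1 ≤ j ∧ ¬ Subsingleton (Ext G Z j))) :=
    hx.subsingleton_ext_and_nonempty_addEquiv n Z fun j hj hjn ↦ by simpa [hj] using hZ j hjn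
  have grade_eq : extGrade X N =
      1 + sInf {i : ℕ∞ | ∃ n : ℕ, i = n ∧ 1 ≤ n ∧ ¬ Subsingleton (Ext G Z n)} :=
    sInf_natCast_eq_one_add (by simp) fun n hZ ↦ by
      obtain ⟨hlt, ⟨f⟩⟩ := key n hZ
      refine ⟨fun i hi ↦ not_not.2 ((extCongrRight e i).subsingleton_congr.2 (hlt i hi)), ?_⟩
      simp [((extCongrRight e (n + 2)).trans f).subsingleton_congr]
  have two_le : 2 ≤ extGrade X N := by
    rw [grade_eq, ← one_add_one_eq_two]
    gcongr
    exact le_sInf fun i ⟨n, hi, hn, _⟩ ↦ hi ▸ Nat.one_le_cast.2 hn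
  refine ⟨two_le, grade_eq, fun g hg ↦ ?_⟩
  obtain ⟨n, rfl⟩ := Nat.exists_eq_add_of_le' (show 2 ≤ g by exact_mod_cast hg ▸ two_le)
  have hinf : sInf {i : ℕ∞ | ∃ n : ℕ, i = n ∧ 1 ≤ n ∧ ¬ Subsingleton (Ext G Z n)} = (n + 1 : ℕ) :=
    ENat.add_right_injective_of_ne_top ENat.one_ne_top <| by
      simp only [← grade_eq, hg]; push_cast; ring
  obtain ⟨-, ⟨f⟩⟩ := key n fun j hj ↦ (sInf_natCast_eq_iff.1 hinf).2 j (by lia)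
  exact ⟨(extCongrRight e (n + 2)).trans f⟩

end Grade

section Generator

variable {A M N : Type} [Ring A] [AddCommGroup M] [Module Aᵐᵒᵖ M] [AddCommGroup N] [Module Aᵐᵒᵖ N]

/-- The isomorphism between the regular right module of `A` and that of `Aᵐᵒᵖ` as a left module. -/
def opEquiv (A : Type) [Ring A] : A ≃ₗ[Aᵐᵒᵖ] Aᵐᵒᵖ :=
  { opLinearEquiv Aᵐᵒᵖ with map_smul' := fun _ _ ↦ rfl }

lemma projective_op_self : Module.Projective Aᵐᵒᵖ A :=
  .of_equiv (opEquiv A).symm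

/-- The map `x ↦ n · lam x`. -/
def rankOne (lam : M →ₗ[Aᵐᵒᵖ] A) (n : N) : M →ₗ[Aᵐᵒᵖ] N :=
  (LinearMap.toSpanSingleton Aᵐᵒᵖ N n ∘ₗ (opEquiv A).toLinearMap) ∘ₗ lam

lemma rankOne_apply (lam : M →ₗ[Aᵐᵒᵖ] A) (n : N) (x : M) : rankOne lam n x = op (lam x) • n := rfl

lemma factorsThroughProjective_rankOne (lam : M →ₗ[Aᵐᵒᵖ] A) (n : N) :
    FactorsThroughProjective (ModuleCat.ofHom (rankOne lam n)) :=
  have := projective_op_self (A := A)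
  ⟨ModuleCat.of Aᵐᵒᵖ A, inferInstance, ModuleCat.ofHom lam,
    ModuleCat.ofHom (LinearMap.toSpanSingleton Aᵐᵒᵖ N n ∘ₗ (opEquiv A).toLinearMap), rfl⟩

lemma rankOne_mem_projectivelyTrivialIdeal (lam : M →ₗ[Aᵐᵒᵖ] A) (m : M) :
    rankOne lam m ∈ projectivelyTrivialIdeal A M :=
  TwoSidedIdeal.subset_span ⟨lam, m, fun _ ↦ rfl⟩

lemma factorsThroughProjective_of_mem {f : Module.End Aᵐᵒᵖ M}
    (hf : f ∈ projectivelyTrivialIdeal A M) :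
    FactorsThroughProjective (ModuleCat.ofHom f) := by
  induction hf using TwoSidedIdeal.span_induction with
  | mem f hf =>
    obtain ⟨lam, m, h⟩ := hf
    obtain rfl : f = rankOne lam m := LinearMap.ext h
    exact factorsThroughProjective_rankOne lam m
  | zero => exact .zero
  | add f g _ _ hf hg => exact hf.add hg
  | neg f _ hf => exact hf.neg
  | left_absorb a f _ hf => exact hf.comp_right (ModuleCat.ofHom a)
  | right_absorb b f _ hf => exact hf.comp_left (ModuleCat.ofHom b)

lemma IsRGenerator.exists_sum_eq_one (hgen : IsRGenerator A M) :
    ∃ (k : ℕ) (p : Fin k → M →ₗ[Aᵐᵒᵖ] A) (s : Fin k → M), ∑ j, p j (s j) = 1 := by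
  obtain ⟨k, p, s, hps⟩ := hgen
  refine ⟨k, fun j ↦ p ∘ₗ LinearMap.single Aᵐᵒᵖ (fun _ ↦ M) j, s 1, ?_⟩
  calc ∑ j, p (Pi.single j (s 1 j)) = p (s 1) := by
        rw [← map_sum, Finset.univ_sum_single]
    _ = 1 := LinearMap.congr_fun hps 1

lemma IsRGenerator.ext_rankOne (hgen : IsRGenerator A M) {N' : Type} [AddCommGroup N']
    [Module Aᵐᵒᵖ N'] {f g : N →ₗ[Aᵐᵒᵖ] N'}
    (h : ∀ (lam : M →ₗ[Aᵐᵒᵖ] A) (n : N), f ∘ₗ rankOne lam n = g ∘ₗ rankOne lam n) : f = g := by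
  obtain ⟨k, p, s, hps⟩ := hgen.exists_sum_eq_one
  have sum_rankOne (n : N) : ∑ j, rankOne (p j) n (s j) = n := by
    simp only [rankOne_apply, ← Finset.sum_smul, ← Finset.op_sum, hps, op_one, one_smul]
  ext n
  rw [← sum_rankOne n, map_sum, map_sum]
  exact Finset.sum_congr rfl fun j _ ↦ LinearMap.congr_fun (h (p j) n) (s j)

lemma IsRGenerator.isSeparator (hgen : IsRGenerator A M) :
    IsSeparator (ModuleCat.of Aᵐᵒᵖ M) :=
  (isSeparator_def _).2 fun _ _ _ _ h ↦ ModuleCat.hom_ext <| hgen.ext_rankOne fun lam n ↦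
    congrArg ModuleCat.Hom.hom (h (ModuleCat.ofHom (rankOne lam n)))

end Generator

section StableEnd

variable {A M : Type} [Ring A] [AddCommGroup M] [Module Aᵐᵒᵖ M]

lemma smul_one_stableEnd (f : (Module.End Aᵐᵒᵖ M)ᵐᵒᵖ) :
    f • (1 : StableEnd A M) = stableEndMk A M f.unop :=
  one_mul _

lemma smul_one_stableEnd_eq_zero_iff (f : (Module.End Aᵐᵒᵖ M)ᵐᵒᵖ) :
    f • (1 : StableEnd A M) = 0 ↔ f.unop ∈ projectivelyTrivialIdeal A M := by
  rw [smul_one_stableEnd]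
  exact RingCon.eq _

lemma span_one_stableEnd :
    Submodule.span (Module.End Aᵐᵒᵖ M)ᵐᵒᵖ {(1 : StableEnd A M)} = ⊤ := by
  rw [Submodule.eq_top_iff']
  intro x
  obtain ⟨f, rfl⟩ := RingCon.mk'_surjective (projectivelyTrivialIdeal A M).ringCon x
  exact Submodule.mem_span_singleton.2 ⟨op f, smul_one_stableEnd _⟩

variable (A M) in
/-- The identification of linear with categorical endomorphisms, on opposite rings. -/
def opEndEquiv : (Module.End Aᵐᵒᵖ M)ᵐᵒᵖ ≃+* (End (ModuleCat.of Aᵐᵒᵖ M))ᵐᵒᵖ :=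
  RingEquiv.op (ModuleCat.endRingEquiv (ModuleCat.of Aᵐᵒᵖ M)).symm

lemma IsRGenerator.isStableQuotient (hgen : IsRGenerator A M) :
    IsStableQuotient (X := ModuleCat.of (Module.End Aᵐᵒᵖ M)ᵐᵒᵖ (StableEnd A M)) (opEndEquiv A M)
      (1 : StableEnd A M) where
  span_eq_top := span_one_stableEnd
  factorsThroughProjective f hf :=
    factorsThroughProjective_of_mem ((smul_one_stableEnd_eq_zero_iff f).1 hf)
  eq_zero _ hq := ModuleCat.hom_ext <| hgen.ext_rankOne fun lam m ↦
    congrArg ModuleCat.Hom.hom (hq (op (rankOne lam m))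
      ((smul_one_stableEnd_eq_zero_iff _).2 (rankOne_mem_projectivelyTrivialIdeal lam m)))

variable (A M) in
/-- `End M` as a right module over itself is the value of `Hom(M, -)` at `M`. -/
def endIsoHomFunctorObj :
    ModuleCat.of (Module.End Aᵐᵒᵖ M)ᵐᵒᵖ (Module.End Aᵐᵒᵖ M) ≅
      (homFunctor (opEndEquiv A M)).obj (ModuleCat.of Aᵐᵒᵖ M) :=
  let e : Module.End Aᵐᵒᵖ M ≃ₗ[(Module.End Aᵐᵒᵖ M)ᵐᵒᵖ]
      (homFunctor (opEndEquiv A M)).obj (ModuleCat.of Aᵐᵒᵖ M) :=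
    { (ModuleCat.endRingEquiv (ModuleCat.of Aᵐᵒᵖ M)).symm.toAddEquiv with
      map_smul' := fun _ _ ↦ rfl }
  e.toModuleIso

end StableEnd

/-- Let `M` be an `A`-generator and let `g` be the grade of the stable
endomorphism ring `End̲_A(M)` over `End_A(M)`. Then
`g = 1 + inf{ 1 ≤ i ≤ ∞ | Ext^i_A(M, M) ≠ 0 } ≥ 2`, and if `g` is finite then
`Ext^g_{End_A(M)}(End̲_A(M), End_A(M)) ≅ Ext^{g-1}_A(M, M)`. -/
theorem grade_of_stable_endomorphism_ring
    (A : Type) [Ring A] (M : Type) [AddCommGroup M] [Module Aᵐᵒᵖ M]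
    (hgen : IsRGenerator A M) :
    (2 ≤ rgrade (Module.End Aᵐᵒᵖ M) (StableEnd A M))
    ∧ rgrade (Module.End Aᵐᵒᵖ M) (StableEnd A M)
        = 1 + sInf {i : ℕ∞ | ∃ n : ℕ, i = n ∧ 1 ≤ n ∧
            ¬ Subsingleton (Abelian.Ext (ModuleCat.of Aᵐᵒᵖ M) (ModuleCat.of Aᵐᵒᵖ M) n)}
    ∧ (∀ g : ℕ, rgrade (Module.End Aᵐᵒᵖ M) (StableEnd A M) = (g : ℕ∞) →
        Nonempty
          (Abelian.Ext (ModuleCat.of (Module.End Aᵐᵒᵖ M)ᵐᵒᵖ (StableEnd A M))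
              (ModuleCat.of (Module.End Aᵐᵒᵖ M)ᵐᵒᵖ (Module.End Aᵐᵒᵖ M)) g ≃+
           Abelian.Ext (ModuleCat.of Aᵐᵒᵖ M) (ModuleCat.of Aᵐᵒᵖ M) (g - 1))) := by
  have := IsGrothendieckAbelian.GabrielPopescu.preservesInjectiveObjects _ hgen.isSeparator
  exact grade_of_stable_endomorphism_ring_general hgen.isStableQuotient (endIsoHomFunctorObj A M)

end MoritaHochschild
end
end
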